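/- arXiv:1802.04411 — 3 statements merged into one kernel-verified Lean document; each statement's English description precedes it below -/
import Mathlib

section
/- There is no constant c > 0 such that for every n ∈ ℕ, every f : C_n → ℝ with E f = 0, and every t ≥ 0, one has ‖e^{tΔ} f‖₁ ≤ e^{−c t} ‖f‖₁. Equivalently: for every c > 0 there exist n ∈ ℕ, a function f : C_n → ℝ with E f = 0, and a time t > 0 such that ‖e^{tΔ} f‖₁ > e^{−c t} ‖f‖₁. -/
/-!
The contraction in `L¹` of mean-zero functions can be arbitrarily weak at any fixed time `t`. The
heat semigroup maps the Riesz product `R_a = ∏ i, (1 + a i * x i)` to `R_{e⁻ᵗ a}`, so it maps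
`f = R_1 - R_{-1}` to `R_r - R_{-r}` with `r = e⁻ᵗ`. The function `f` has norm at most `2`, being a
difference of two probability densities. The overlap of the densities `R_r` and `R_{-r}` is at most
`E √(R_r R_{-r}) = (1 - r²)^(n/2)`, which vanishes as `n → ∞`: in high dimension they are almost
mutually singular, and the norm of `R_r - R_{-r}` is close to `2` again.
-/

open Finset MeasureTheory Real

noncomputable section

/-- Expectation on the Hamming cube `{-1,1}^n`, modeled as `Fin n → Bool`
(`true ↔ 1`, `false ↔ -1`), with the uniform probability measure. -/
def cubeE {n : ℕ} (f : (Fin n → Bool) → ℝ) : ℝ :=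
  (∑ x : Fin n → Bool, f x) / 2 ^ n

/-- The Walsh monomial `x^S = ∏_{i ∈ S} x_i`. -/
def walsh {n : ℕ} (S : Finset (Fin n)) (x : Fin n → Bool) : ℝ :=
  ∏ i ∈ S, (if x i then (1 : ℝ) else -1)

/-- Fourier coefficient `f̂(S) = E (f · x^S)`. -/
def cubeFourier {n : ℕ} (f : (Fin n → Bool) → ℝ) (S : Finset (Fin n)) : ℝ :=
  cubeE fun x => f x * walsh S x

/-- The heat semigroup `e^{tΔ} f = Σ_S e^{-t|S|} f̂(S) x^S`. -/
def heat1 {n : ℕ} (t : ℝ) (f : (Fin n → Bool) → ℝ) : (Fin n → Bool) → ℝ :=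
  fun x => ∑ S : Finset (Fin n), Real.exp (-t * (S.card : ℝ)) * cubeFourier f S * walsh S x

/-- The fractional heat semigroup `e^{tΔ_γ} f = Σ_S e^{-t|S|^γ} f̂(S) x^S`. -/
def heatFrac {n : ℕ} (γ t : ℝ) (f : (Fin n → Bool) → ℝ) : (Fin n → Bool) → ℝ :=
  fun x => ∑ S : Finset (Fin n), Real.exp (-t * (S.card : ℝ) ^ γ) * cubeFourier f S * walsh S x

/-- The Laplacian `Δf = -Σ_S |S| f̂(S) x^S`. -/
def lap {n : ℕ} (f : (Fin n → Bool) → ℝ) : (Fin n → Bool) → ℝ :=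
  fun x => -∑ S : Finset (Fin n), (S.card : ℝ) * cubeFourier f S * walsh S x

/-- The fractional Laplacian `Δ_γ f = -Σ_S |S|^γ f̂(S) x^S`. -/
def fracLap {n : ℕ} (γ : ℝ) (f : (Fin n → Bool) → ℝ) : (Fin n → Bool) → ℝ :=
  fun x => -∑ S : Finset (Fin n), (S.card : ℝ) ^ γ * cubeFourier f S * walsh S x

/-- The discrete partial derivative `∇_j f`. -/
def cubeGrad {n : ℕ} (j : Fin n) (f : (Fin n → Bool) → ℝ) (x : Fin n → Bool) : ℝ :=
  (f (Function.update x j true) - f (Function.update x j false)) / 2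

/-- The squared length of the discrete gradient, `|∇f|²(x) = Σ_j |∇_j f(x)|²`. -/
def gradSq {n : ℕ} (f : (Fin n → Bool) → ℝ) (x : Fin n → Bool) : ℝ :=
  ∑ j : Fin n, (cubeGrad j f x) ^ 2

/-- The `L^p` norm `‖f‖_p = (E|f|^p)^{1/p}` on the Hamming cube. -/
def pNorm {n : ℕ} (p : ℝ) (f : (Fin n → Bool) → ℝ) : ℝ :=
  (cubeE fun x => |f x| ^ p) ^ (1 / p)

lemma min_le_sqrt_mul {p q : ℝ} (hp : 0 ≤ p) (hq : 0 ≤ q) : min p q ≤ √(p * q) :=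
  Real.le_sqrt_of_sq_le <| by
    rw [sq]
    exact mul_le_mul (min_le_left p q) (min_le_right p q) (le_min hp hq) hp

lemma add_sub_two_mul_sqrt_mul_le_abs_sub {p q : ℝ} (hp : 0 ≤ p) (hq : 0 ≤ q) :
    p + q - 2 * √(p * q) ≤ |p - q| := by
  have h_min : 2 * min p q = p + q - |p - q| := by
    rw [abs_sub_comm, ← two_nsmul_inf_eq_add_sub_abs_sub, two_nsmul, two_mul]
  linarith [min_le_sqrt_mul hp hq]

section Expectation

variable {n : ℕ}

open scoped BigOperators

lemma cubeE_eq_expect (f : (Fin n → Bool) → ℝ) : cubeE f = 𝔼 x, f x := by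
  simp [cubeE, Fintype.expect_eq_sum_div_card]

lemma cubeE_sub (f g : (Fin n → Bool) → ℝ) : cubeE (f - g) = cubeE f - cubeE g := by
  simp only [cubeE_eq_expect, Pi.sub_apply, expect_sub_distrib]

lemma cubeE_const (k : ℝ) : cubeE (fun _ : Fin n → Bool => k) = k := by
  rw [cubeE_eq_expect, Fintype.expect_const]

lemma cubeE_prod_apply (g : Fin n → Bool → ℝ) :
    cubeE (fun x => ∏ i, g i (x i)) = ∏ i, (g i true + g i false) / 2 := by
  simp only [cubeE, ← Fintype.prod_sum, Fintype.sum_bool, prod_div_distrib, prod_const, card_univ,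
    Fintype.card_fin]

lemma pNorm_one_eq_cubeE_abs (f : (Fin n → Bool) → ℝ) : pNorm 1 f = cubeE fun x => |f x| := by
  simp [pNorm]

lemma pNorm_one_of_nonneg {f : (Fin n → Bool) → ℝ} (hf : 0 ≤ f) : pNorm 1 f = cubeE f := by
  simp only [pNorm_one_eq_cubeE_abs, abs_of_nonneg (hf _)]

lemma pNorm_one_nonneg (f : (Fin n → Bool) → ℝ) : 0 ≤ pNorm 1 f := by
  rw [pNorm_one_eq_cubeE_abs, cubeE_eq_expect]
  exact expect_nonneg fun x _ => abs_nonneg (f x)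

lemma pNorm_one_sub_le (f g : (Fin n → Bool) → ℝ) :
    pNorm 1 (f - g) ≤ pNorm 1 f + pNorm 1 g := by
  simp only [pNorm_one_eq_cubeE_abs, cubeE_eq_expect, ← expect_add_distrib]
  exact expect_le_expect fun x _ => abs_sub (f x) (g x)

lemma cubeE_add_cubeE_sub_le_pNorm_one_sub {f g : (Fin n → Bool) → ℝ} (hf : 0 ≤ f)
    (hg : 0 ≤ g) :
    cubeE f + cubeE g - 2 * cubeE (fun x => √(f x * g x)) ≤ pNorm 1 (f - g) := by
  simp only [pNorm_one_eq_cubeE_abs, cubeE_eq_expect, mul_expect, ← expect_add_distrib,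
    ← expect_sub_distrib]
  exact expect_le_expect fun x _ => add_sub_two_mul_sqrt_mul_le_abs_sub (hf x) (hg x)

end Expectation

section Heat

variable {n : ℕ}

lemma cubeFourier_sub (f g : (Fin n → Bool) → ℝ) (S : Finset (Fin n)) :
    cubeFourier (f - g) S = cubeFourier f S - cubeFourier g S := by
  simp only [cubeFourier, ← cubeE_sub, Pi.sub_def, sub_mul]

lemma heat1_sub (t : ℝ) (f g : (Fin n → Bool) → ℝ) :
    heat1 t (f - g) = heat1 t f - heat1 t g := by
  funext x
  simp only [heat1, Pi.sub_apply, cubeFourier_sub, mul_sub, sub_mul, sum_sub_distrib]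

end Heat

/-- The Riesz product `∏ i, (1 + a i * x i)`. For `|a i| ≤ 1` it is the density with respect to `μ`
of the product probability measure whose `i`-th coordinate has mean `a i`. -/
def rieszProduct {n : ℕ} (a : Fin n → ℝ) (x : Fin n → Bool) : ℝ :=
  ∏ i, (1 + a i * if x i then (1 : ℝ) else -1)

section RieszProduct

variable {n : ℕ}

lemma rieszProduct_eq_sum_walsh (a : Fin n → ℝ) (x : Fin n → Bool) :
    rieszProduct a x = ∑ S, (∏ i ∈ S, a i) * walsh S x := by
  simp only [rieszProduct, walsh, prod_one_add, prod_mul_distrib, powerset_univ]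

lemma cubeFourier_rieszProduct (a : Fin n → ℝ) (S : Finset (Fin n)) :
    cubeFourier (rieszProduct a) S = ∏ i ∈ S, a i := by
  let sign (b : Bool) : ℝ := if b then 1 else -1
  let factor (i : Fin n) (b : Bool) : ℝ := (1 + a i * sign b) * if i ∈ S then sign b else 1
  have h_factor (x : Fin n → Bool) : rieszProduct a x * walsh S x = ∏ i, factor i (x i) := by
    simp only [rieszProduct, walsh, factor, sign, prod_mul_distrib, prod_ite_mem, univ_inter]
  have h_mean (i : Fin n) : (factor i true + factor i false) / 2 = if i ∈ S then a i else 1 := by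
    by_cases hi : i ∈ S <;> simp [factor, sign, hi] <;> ring
  simp only [cubeFourier, h_factor, cubeE_prod_apply, h_mean, prod_ite_mem, univ_inter]

lemma cubeE_rieszProduct (a : Fin n → ℝ) : cubeE (rieszProduct a) = 1 := by
  simpa [cubeFourier, walsh] using cubeFourier_rieszProduct a ∅

lemma heat1_rieszProduct (t : ℝ) (a : Fin n → ℝ) :
    heat1 t (rieszProduct a) = rieszProduct (Real.exp (-t) • a) := by
  funext x
  simp only [heat1, cubeFourier_rieszProduct, rieszProduct_eq_sum_walsh, Pi.smul_apply,
    smul_eq_mul, prod_mul_distrib, prod_const, mul_comm (-t), Real.exp_nat_mul]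

lemma rieszProduct_nonneg {a : Fin n → ℝ} (ha : ∀ i, |a i| ≤ 1) : 0 ≤ rieszProduct a := by
  intro x
  refine prod_nonneg fun i _ => ?_
  obtain ⟨h_lower, h_upper⟩ := abs_le.1 (ha i)
  split_ifs <;> linarith

lemma pNorm_one_rieszProduct {a : Fin n → ℝ} (ha : ∀ i, |a i| ≤ 1) :
    pNorm 1 (rieszProduct a) = 1 := by
  rw [pNorm_one_of_nonneg (rieszProduct_nonneg ha), cubeE_rieszProduct]

lemma pNorm_one_rieszProduct_sub_le {a b : Fin n → ℝ} (ha : ∀ i, |a i| ≤ 1)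
    (hb : ∀ i, |b i| ≤ 1) : pNorm 1 (rieszProduct a - rieszProduct b) ≤ 2 := by
  linarith [pNorm_one_sub_le (rieszProduct a) (rieszProduct b), pNorm_one_rieszProduct ha,
    pNorm_one_rieszProduct hb]

lemma rieszProduct_mul_rieszProduct_neg (a : Fin n → ℝ) (x : Fin n → Bool) :
    rieszProduct a x * rieszProduct (-a) x = ∏ i, (1 - a i ^ 2) := by
  rw [rieszProduct, rieszProduct, ← prod_mul_distrib]
  refine prod_congr rfl fun i _ => ?_
  rw [Pi.neg_apply]
  split_ifs <;> ring

lemma two_sub_le_pNorm_one_rieszProduct_sub_neg {a : Fin n → ℝ} (ha : ∀ i, |a i| ≤ 1) :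
    2 - 2 * √(∏ i, (1 - a i ^ 2)) ≤ pNorm 1 (rieszProduct a - rieszProduct (-a)) := by
  have h_neg : ∀ i, |(-a) i| ≤ 1 := by simpa only [Pi.neg_apply, abs_neg] using ha
  have h := cubeE_add_cubeE_sub_le_pNorm_one_sub (rieszProduct_nonneg ha)
    (rieszProduct_nonneg h_neg)
  simp only [cubeE_rieszProduct, rieszProduct_mul_rieszProduct_neg, cubeE_const] at h
  linarith

end RieszProduct

theorem stmt15_general {t : ℝ} (ht : 0 ≤ t) {K : ℝ} (hK : K < 1) :
    ∃ (n : ℕ) (f : (Fin n → Bool) → ℝ),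
      cubeE f = 0 ∧ K * pNorm 1 f < pNorm 1 (heat1 t f) := by
  let r := Real.exp (-t)
  have hr_pos : 0 < r := Real.exp_pos _
  have hr_le : r ≤ 1 := Real.exp_le_one_iff.2 (neg_nonpos.2 ht)
  have h_gap : 0 < 1 - max K 0 := sub_pos.2 (max_lt hK one_pos)
  obtain ⟨n, hn⟩ : ∃ n : ℕ, (1 - r ^ 2) ^ n < (1 - max K 0) ^ 2 :=
    exists_pow_lt_of_lt_one (pow_pos h_gap 2) (sub_lt_self 1 (pow_pos hr_pos 2))
  have h_overlap : √((1 - r ^ 2) ^ n) < 1 - max K 0 := (Real.sqrt_lt' h_gap).2 hn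
  let a : Fin n → ℝ := r • 1
  have ha (i : Fin n) : |a i| ≤ 1 := by simpa [a, abs_of_pos hr_pos] using hr_le
  let f : (Fin n → Bool) → ℝ := rieszProduct 1 - rieszProduct (-1)
  have h_heat : heat1 t f = rieszProduct a - rieszProduct (-a) := by
    simp only [f, a, heat1_sub, heat1_rieszProduct, r, smul_neg]
  have h_norm : pNorm 1 f ≤ 2 := pNorm_one_rieszProduct_sub_le (by simp) (by simp)
  refine ⟨n, f, by simp only [f, cubeE_sub, cubeE_rieszProduct, sub_self], ?_⟩
  calc K * pNorm 1 f
      ≤ max K 0 * 2 :=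
        mul_le_mul (le_max_left K 0) h_norm (pNorm_one_nonneg f) (le_max_right K 0)
    _ < 2 - 2 * √((1 - r ^ 2) ^ n) := by linarith
    _ = 2 - 2 * √(∏ i, (1 - a i ^ 2)) := by simp [a]
    _ ≤ pNorm 1 (rieszProduct a - rieszProduct (-a)) :=
        two_sub_le_pNorm_one_rieszProduct_sub_neg ha
    _ = pNorm 1 (heat1 t f) := by rw [h_heat]

/-- There is no uniform (dimension-free) `L¹` spectral gap for the heat
semigroup: no `c > 0` satisfies `‖e^{tΔ} f‖₁ ≤ e^{-ct} ‖f‖₁` for every `n`,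
every `f : C_n → ℝ` with `E f = 0`, and every `t ≥ 0`. -/
theorem stmt15 :
    ¬ ∃ c : ℝ, 0 < c ∧
        ∀ (n : ℕ) (f : (Fin n → Bool) → ℝ), cubeE f = 0 →
          ∀ t : ℝ, 0 ≤ t → pNorm 1 (heat1 t f) ≤ Real.exp (-c * t) * pNorm 1 f := by
  rintro ⟨c, hc, h_gap⟩
  obtain ⟨n, f, hf, h_lt⟩ :=
    stmt15_general zero_le_one (Real.exp_lt_one_iff.2 (by linarith : -c * 1 < 0))
  exact (h_gap n f hf 1 zero_le_one).not_gt h_lt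
end
end

section
/- Fix n ∈ ℕ and let f : C_n → ℝ be the function defined by f(1,…,1) = 2^{n−1}, f(−1,…,−1) = −2^{n−1}, and f(x) = 0 at all other points of C_n. Then E f = 0, ‖f‖₁ = 1, and for every t > 0, ‖e^{tΔ} f‖₁ = 2^{−n} · Σ_{0 ≤ k ≤ n/2} C(n,k) · ((1 + e^{−t})^{n−k} (1 − e^{−t})^k − (1 − e^{−t})^{n−k} (1 + e^{−t})^k), where C(n,k) denotes the binomial coefficient and the sum ranges over integers k with 0 ≤ k ≤ n/2. -/
open Finset MeasureTheory Real

noncomputable section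

/-
The heat semigroup is convolution with a product kernel: `e^{tΔ} f (x)` is the mean over `y` of
`f y * (1 + e^{-t})^(n - d) * (1 - e^{-t})^d`, where `d` is the Hamming distance from `x` to `y`.
For `f = 2^{n-1} (δ_y - δ_{yᶜ})` it is therefore a difference of two kernels whose distances add
up to `n`. Grouping the points `x` by `d` turns the `L¹` norm into a binomial sum of absolute
values of terms that change sign under `d ↦ n - d` and are nonnegative for `2 d ≤ n`, so it is
twice the sum over `2 d ≤ n`.
-/

section HammingDistance

variable {ι : Type*} [Fintype ι]

theorem hammingDist_compl_right (x y : ι → Bool) :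
    hammingDist x yᶜ = Fintype.card ι - hammingDist x y := by
  classical
  have h_compl : ({i | x i ≠ yᶜ i} : Finset ι) = ({i | x i ≠ y i} : Finset ι)ᶜ := by
    ext i
    cases hx : x i <;> cases hy : y i <;> simp [hx, hy]
  rw [hammingDist, h_compl, card_compl, hammingDist]

theorem sum_apply_hammingDist {M : Type*} [AddCommMonoid M] [DecidableEq ι] (F : ℕ → M)
    (y : ι → Bool) :
    ∑ x, F (hammingDist x y) =
      ∑ k ∈ range (Fintype.card ι + 1), (Fintype.card ι).choose k • F k :=
  calc
    ∑ x, F (hammingDist x y) = ∑ S : Finset ι, F #S :=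
      sum_nbij' (fun x ↦ ({i | x i ≠ y i} : Finset ι)) (fun S i ↦ decide (i ∈ S) ^^ y i)
        (by simp) (by simp)
        (fun x _ ↦ by ext i; cases hx : x i <;> cases hy : y i <;> simp [hx, hy])
        (fun S _ ↦ by ext i; by_cases hi : i ∈ S <;> simp [hi])
        (fun _ _ ↦ rfl)
    _ = ∑ k ∈ range (Fintype.card ι + 1), (Fintype.card ι).choose k • F k := by
      rw [← powerset_univ, sum_powerset_apply_card, card_univ]

end HammingDistance

section BinomialSums

theorem sum_abs_of_reflect_eq_neg {G : Type*} [AddCommGroup G] [LinearOrder G]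
    [IsOrderedAddMonoid G] {n : ℕ} {a : ℕ → G} (h_reflect : ∀ k ≤ n, a (n - k) = -a k)
    (h_nonneg : ∀ k, 2 * k ≤ n → 0 ≤ a k) :
    ∑ k ∈ range (n + 1), |a k| = 2 • ∑ k ∈ range (n + 1) with 2 * k ≤ n, a k := by
  set b : ℕ → G := fun k ↦ if 2 * k ≤ n then a k else 0 with hb
  have h_abs : ∀ k ∈ range (n + 1), |a k| = b k + b (n - k) := by
    intro k hk
    have hkn : k ≤ n := mem_range_succ_iff.mp hk
    rcases lt_trichotomy (2 * k) n with h | h | h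
    · simp [hb, h.le, show ¬ 2 * (n - k) ≤ n by lia, abs_of_nonneg (h_nonneg k h.le)]
    · have h_neg : a k = -a k := by simpa [show n - k = k by lia] using h_reflect k hkn
      have h_zero : a k = 0 := self_eq_neg.mp h_neg
      simp [hb, h.le, show n - k = k by lia, h_zero]
    · have h_nonpos : a k ≤ 0 := by
        simpa [h_reflect k hkn] using h_nonneg (n - k) (by lia)
      simp [hb, show ¬ 2 * k ≤ n by lia, show 2 * (n - k) ≤ n by lia, h_reflect k hkn,
        abs_of_nonpos h_nonpos]
  rw [sum_congr rfl h_abs, sum_add_distrib, sum_flip, ← two_nsmul, sum_filter]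

variable {R : Type*} [CommRing R] [LinearOrder R] [IsStrictOrderedRing R] {n k : ℕ} {p q : R}

theorem pow_mul_pow_le_pow_mul_pow (hq : 0 ≤ q) (hpq : q ≤ p) (hk : 2 * k ≤ n) :
    q ^ (n - k) * p ^ k ≤ p ^ (n - k) * q ^ k := by
  have hp : 0 ≤ p := hq.trans hpq
  calc
    q ^ (n - k) * p ^ k = q ^ (n - 2 * k) * (p * q) ^ k := by
      rw [show n - k = (n - 2 * k) + k by lia]; ring
    _ ≤ p ^ (n - 2 * k) * (p * q) ^ k := by gcongr
    _ = p ^ (n - k) * q ^ k := by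
      rw [show n - k = (n - 2 * k) + k by lia]; ring

theorem sum_choose_mul_abs_pow_mul_pow_sub (n : ℕ) (hq : 0 ≤ q) (hpq : q ≤ p) :
    ∑ k ∈ range (n + 1), (n.choose k : R) * |p ^ (n - k) * q ^ k - q ^ (n - k) * p ^ k| =
      2 * ∑ k ∈ range (n + 1) with 2 * k ≤ n,
        (n.choose k : R) * (p ^ (n - k) * q ^ k - q ^ (n - k) * p ^ k) := by
  have h_reflect : ∀ k ≤ n,
      (n.choose (n - k) : R) *
          (p ^ (n - (n - k)) * q ^ (n - k) - q ^ (n - (n - k)) * p ^ (n - k)) =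
        -((n.choose k : R) * (p ^ (n - k) * q ^ k - q ^ (n - k) * p ^ k)) := by
    intro k hk
    rw [Nat.choose_symm hk, Nat.sub_sub_self hk]
    ring
  have h_nonneg : ∀ k, 2 * k ≤ n →
      0 ≤ (n.choose k : R) * (p ^ (n - k) * q ^ k - q ^ (n - k) * p ^ k) := fun k hk ↦
    mul_nonneg (Nat.cast_nonneg _) (sub_nonneg.mpr (pow_mul_pow_le_pow_mul_pow hq hpq hk))
  simpa only [abs_mul, Nat.abs_cast, two_nsmul, ← two_mul] using
    sum_abs_of_reflect_eq_neg h_reflect h_nonneg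

end BinomialSums

section HeatKernel

variable {n : ℕ}

theorem pNorm_one (f : (Fin n → Bool) → ℝ) : pNorm 1 f = cubeE fun x ↦ |f x| := by
  simp only [pNorm, rpow_one, div_one]

theorem walsh_mul_walsh (S : Finset (Fin n)) (x y : Fin n → Bool) :
    walsh S x * walsh S y = ∏ i ∈ S, if x i ≠ y i then (-1 : ℝ) else 1 := by
  rw [walsh, walsh, ← prod_mul_distrib]
  refine prod_congr rfl fun i _ ↦ ?_
  cases x i <;> cases y i <;> simp

theorem sum_pow_card_mul_walsh_mul_walsh (ρ : ℝ) (x y : Fin n → Bool) :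
    ∑ S, ρ ^ #S * (walsh S x * walsh S y) =
      (1 + ρ) ^ (n - hammingDist x y) * (1 - ρ) ^ hammingDist x y :=
  calc
    ∑ S, ρ ^ #S * (walsh S x * walsh S y) =
        ∑ S : Finset (Fin n), ∏ i ∈ S, ρ * (if x i ≠ y i then -1 else 1) := by
      simp only [walsh_mul_walsh, prod_mul_distrib, prod_const]
    _ = ∏ i, (1 + ρ * (if x i ≠ y i then -1 else 1)) := by
      rw [prod_one_add, powerset_univ]
    _ = ∏ i, if x i ≠ y i then 1 - ρ else 1 + ρ := by
      refine prod_congr rfl fun i _ ↦ ?_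
      split_ifs <;> ring
    _ = (1 - ρ) ^ hammingDist x y * (1 + ρ) ^ (n - hammingDist x y) := by
      have h_card : #{i | ¬ x i ≠ y i} = n - hammingDist x y := by
        rw [filter_not, card_univ_sdiff, Fintype.card_fin, hammingDist]
      rw [prod_ite, prod_const, prod_const, h_card, hammingDist]
    _ = (1 + ρ) ^ (n - hammingDist x y) * (1 - ρ) ^ hammingDist x y := mul_comm _ _

/-- The kernel of the heat semigroup `e^{tΔ}` with respect to the uniform probability measure,
that is, the product `∏ᵢ (1 + e^{-t} xᵢ yᵢ)` over the coordinates; it is written in closed form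
because it depends on `x` and `y` only through their Hamming distance. -/
def heatKernel (t : ℝ) (x y : Fin n → Bool) : ℝ :=
  (1 + exp (-t)) ^ (n - hammingDist x y) * (1 - exp (-t)) ^ hammingDist x y

theorem heatKernel_compl_right (t : ℝ) (x y : Fin n → Bool) :
    heatKernel t x yᶜ =
      (1 - exp (-t)) ^ (n - hammingDist x y) * (1 + exp (-t)) ^ hammingDist x y := by
  have h_le : hammingDist x y ≤ n := by
    simpa only [Fintype.card_fin] using hammingDist_le_card_fintype (x := x) (y := y)
  rw [heatKernel, hammingDist_compl_right, Fintype.card_fin, Nat.sub_sub_self h_le, mul_comm]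

theorem heat1_eq_cubeE_mul_heatKernel (t : ℝ) (f : (Fin n → Bool) → ℝ) (x : Fin n → Bool) :
    heat1 t f x = cubeE fun y ↦ f y * heatKernel t x y := by
  have h_exp (S : Finset (Fin n)) : exp (-t * #S) = exp (-t) ^ #S := by
    rw [mul_comm, exp_nat_mul]
  simp only [heat1, cubeFourier, cubeE, heatKernel, ← sum_pow_card_mul_walsh_mul_walsh, h_exp,
    mul_sum, sum_mul, sum_div]
  rw [sum_comm]
  refine sum_congr rfl fun y _ ↦ sum_congr rfl fun S _ ↦ ?_
  ring

end HeatKernel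

section AntipodalDipole

variable {n : ℕ}

/-- The difference `2^{n-1} (δ_y - δ_{yᶜ})` of the point masses at a vertex `y` of the cube and at
its antipode `yᶜ`, scaled to have unit `L¹` norm when `0 < n`. The weight is written `2 ^ n / 2`
to avoid the truncated subtraction in `n - 1`. -/
def antipodalDipole (y : Fin n → Bool) : (Fin n → Bool) → ℝ :=
  Pi.single y (2 ^ n / 2) - Pi.single yᶜ (2 ^ n / 2)

theorem cubeE_antipodalDipole_mul (y : Fin n → Bool) (g : (Fin n → Bool) → ℝ) :
    (cubeE fun x ↦ antipodalDipole y x * g x) = (g y - g yᶜ) / 2 := by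
  simp only [cubeE, antipodalDipole, Pi.sub_apply, Pi.single_apply, sub_mul, ite_mul, zero_mul,
    sum_sub_distrib, sum_ite_eq', mem_univ, if_true]
  field_simp

theorem cubeE_antipodalDipole (y : Fin n → Bool) : cubeE (antipodalDipole y) = 0 := by
  simpa only [mul_one, sub_self, zero_div] using cubeE_antipodalDipole_mul y fun _ ↦ 1

theorem abs_antipodalDipole [NeZero n] (y x : Fin n → Bool) :
    |antipodalDipole y x| = antipodalDipole y x * (if x = y then 1 else -1) := by
  have h_ne : y ≠ yᶜ := ne_compl_self
  have h_weight : (0 : ℝ) ≤ 2 ^ n / 2 := by positivity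
  rcases eq_or_ne x y with rfl | hxy
  · simp [antipodalDipole, h_ne, h_weight]
  · rcases eq_or_ne x yᶜ with rfl | hxy' <;> simp [antipodalDipole, *]

theorem pNorm_one_antipodalDipole [NeZero n] (y : Fin n → Bool) :
    pNorm 1 (antipodalDipole y) = 1 := by
  simp only [pNorm_one, abs_antipodalDipole, cubeE_antipodalDipole_mul, if_true, compl_ne_self,
    if_false]
  norm_num

theorem heat1_antipodalDipole (t : ℝ) (x y : Fin n → Bool) :
    heat1 t (antipodalDipole y) x = (heatKernel t x y - heatKernel t x yᶜ) / 2 := by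
  rw [heat1_eq_cubeE_mul_heatKernel, cubeE_antipodalDipole_mul]

theorem pNorm_one_heat1_antipodalDipole {t : ℝ} (ht : 0 ≤ t) (y : Fin n → Bool) :
    pNorm 1 (heat1 t (antipodalDipole y)) =
      (1 / 2 ^ n) * ∑ k ∈ range (n + 1) with 2 * k ≤ n, (n.choose k : ℝ) *
        ((1 + exp (-t)) ^ (n - k) * (1 - exp (-t)) ^ k -
          (1 - exp (-t)) ^ (n - k) * (1 + exp (-t)) ^ k) := by
  have hq : 0 ≤ 1 - exp (-t) := sub_nonneg.mpr (exp_le_one_iff.mpr (neg_nonpos.mpr ht))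
  have hqp : 1 - exp (-t) ≤ 1 + exp (-t) := by linarith [exp_pos (-t)]
  let D : ℕ → ℝ := fun k ↦
    (1 + exp (-t)) ^ (n - k) * (1 - exp (-t)) ^ k - (1 - exp (-t)) ^ (n - k) * (1 + exp (-t)) ^ k
  calc
    pNorm 1 (heat1 t (antipodalDipole y)) = (∑ x, |D (hammingDist x y)| / 2) / 2 ^ n := by
      simp only [pNorm_one, cubeE, heat1_antipodalDipole, heatKernel_compl_right, abs_div,
        Nat.abs_ofNat]
      rfl
    _ = (∑ k ∈ range (n + 1), n.choose k * |D k|) / 2 / 2 ^ n := by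
      rw [← sum_div, sum_apply_hammingDist (fun k ↦ |D k|)]
      simp only [Fintype.card_fin, nsmul_eq_mul]
    _ = (2 * ∑ k ∈ range (n + 1) with 2 * k ≤ n, n.choose k * D k) / 2 / 2 ^ n := by
      rw [sum_choose_mul_abs_pow_mul_pow_sub n hq hqp]
    _ = (1 / 2 ^ n) * ∑ k ∈ range (n + 1) with 2 * k ≤ n, n.choose k * D k := by ring

theorem ite_forall_eq_antipodalDipole_top [NeZero n] :
    (fun x : Fin n → Bool ↦
      if ∀ i, x i = true then (2 : ℝ) ^ (n - 1)
      else if ∀ i, x i = false then -(2 : ℝ) ^ (n - 1)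
      else 0) = antipodalDipole ⊤ := by
  have h_pow : (2 : ℝ) ^ n / 2 = 2 ^ (n - 1) := by
    rw [← pow_sub_one_mul (NeZero.ne n), mul_div_cancel_right₀ _ two_ne_zero]
  have h_top (x : Fin n → Bool) : (∀ i, x i = true) ↔ x = ⊤ := funext_iff.symm
  have h_bot (x : Fin n → Bool) : (∀ i, x i = false) ↔ x = ⊥ := funext_iff.symm
  funext x
  simp only [h_top, h_bot, antipodalDipole, compl_top, h_pow, Pi.sub_apply, Pi.single_apply]
  rcases eq_or_ne x ⊤ with rfl | hx
  · simp
  · rcases eq_or_ne x ⊥ with rfl | hx' <;> simp [*]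

end AntipodalDipole

/-- The basic counterexample function: `f(1,…,1) = 2^{n-1}`,
`f(-1,…,-1) = -2^{n-1}`, `f = 0` elsewhere (here `true ↔ 1`, `false ↔ -1`).
Then `E f = 0`, `‖f‖₁ = 1`, and for every `t > 0`, `‖e^{tΔ} f‖₁` equals the
explicit binomial sum
`2^{-n} Σ_{0 ≤ k ≤ n/2} C(n,k) ((1+e^{-t})^{n-k}(1-e^{-t})^k - (1-e^{-t})^{n-k}(1+e^{-t})^k)`. -/
theorem stmt16 (n : ℕ) (hn : 1 ≤ n) (f : (Fin n → Bool) → ℝ)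
    (hf : f = fun x =>
      if ∀ i, x i = true then (2 : ℝ) ^ (n - 1)
      else if ∀ i, x i = false then -(2 : ℝ) ^ (n - 1)
      else 0) :
    cubeE f = 0 ∧ pNorm 1 f = 1 ∧
      ∀ t : ℝ, 0 < t →
        pNorm 1 (heat1 t f) =
          (1 / 2 ^ n) *
            ∑ k ∈ (Finset.range (n + 1)).filter (fun k => 2 * k ≤ n),
              (n.choose k : ℝ) *
                ((1 + Real.exp (-t)) ^ (n - k) * (1 - Real.exp (-t)) ^ k -
                  (1 - Real.exp (-t)) ^ (n - k) * (1 + Real.exp (-t)) ^ k) := by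
  have : NeZero n := NeZero.of_pos hn
  obtain rfl : f = antipodalDipole ⊤ := hf.trans ite_forall_eq_antipodalDipole_top
  exact ⟨cubeE_antipodalDipole ⊤, pNorm_one_antipodalDipole ⊤,
    fun t ht ↦ pNorm_one_heat1_antipodalDipole ht.le ⊤⟩
end
end

section
/- Let 0 < ε ≤ 1/2. Then for all sufficiently large n (depending on ε), one has 2^{−n} · Σ_{0 ≤ k ≤ n/2} C(n,k) · ((1 + ε)^{n−k} (1 − ε)^k − (1 + ε)^k (1 − ε)^{n−k}) ≥ (1/2) · (1 − (1 − ε²)^{n/2}), where C(n,k) denotes the binomial coefficient and the sum ranges over integers k with 0 ≤ k ≤ n/2. -/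
open Finset Real

/-!
Let `s = √(ab)` with `0 ≤ b ≤ a`. A monomial `aʲ bᵏ` with `j ≤ k` is at most `sʲ⁺ᵏ`. Hence, for
`2k ≤ n`, the subtracted term `aᵏ bⁿ⁻ᵏ` may be replaced by `sⁿ`; for `2k > n`, the quantity
`aⁿ⁻ᵏ bᵏ - sⁿ` is nonpositive, so the half sum dominates the full binomial sum of
`aⁿ⁻ᵏ bᵏ - sⁿ`, which is `(a + b)ⁿ - (2s)ⁿ`. Take `a = 1 + ε` and `b = 1 - ε`.
-/

theorem pow_mul_pow_le_pow_add_of_mul_eq_sq {R : Type*} [CommSemiring R] [PartialOrder R]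
    [IsOrderedRing R] {a b s : R} (hb : 0 ≤ b) (hbs : b ≤ s) (hab : a * b = s ^ 2) {j k : ℕ}
    (hjk : j ≤ k) : a ^ j * b ^ k ≤ s ^ (j + k) := by
  obtain ⟨m, rfl⟩ := Nat.exists_eq_add_of_le hjk
  have hs : 0 ≤ s := hb.trans hbs
  calc a ^ j * b ^ (j + m) = (a * b) ^ j * b ^ m := by ring
    _ = (s ^ 2) ^ j * b ^ m := by rw [hab]
    _ ≤ (s ^ 2) ^ j * s ^ m := by gcongr
    _ = s ^ (j + (j + m)) := by ring

theorem add_pow_sub_two_mul_pow_eq_sum {R : Type*} [CommRing R] (a b s : R) (n : ℕ) :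
    (a + b) ^ n - (2 * s) ^ n =
      ∑ k ∈ range (n + 1), (n.choose k : R) * (a ^ (n - k) * b ^ k - s ^ n) := by
  have hab : (a + b) ^ n = ∑ k ∈ range (n + 1), (n.choose k : R) * (a ^ (n - k) * b ^ k) := by
    rw [add_comm, add_pow]
    exact sum_congr rfl fun k _ => by ring
  have hs : (2 * s) ^ n = ∑ k ∈ range (n + 1), (n.choose k : R) * s ^ n := by
    rw [← sum_mul, ← Nat.cast_sum, Nat.sum_range_choose, mul_pow, Nat.cast_pow, Nat.cast_ofNat]
  simp only [hab, hs, mul_sub, sum_sub_distrib]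

theorem add_pow_sub_two_mul_pow_le_sum_choose_mul_sub {R : Type*} [CommRing R] [LinearOrder R]
    [IsStrictOrderedRing R] {a b s : R} (hb : 0 ≤ b) (hba : b ≤ a) (hs : 0 ≤ s)
    (hab : a * b = s ^ 2) (n : ℕ) :
    (a + b) ^ n - (2 * s) ^ n ≤
      ∑ k ∈ range (n + 1) with 2 * k ≤ n,
        (n.choose k : R) * (a ^ (n - k) * b ^ k - a ^ k * b ^ (n - k)) := by
  have hbs : b ≤ s := by
    refine le_of_sq_le_sq ?_ hs
    calc b ^ 2 = b * b := sq b
      _ ≤ a * b := by gcongr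
      _ = s ^ 2 := hab
  have pow_mul_pow_le {j k : ℕ} (hjk : j ≤ k) (hn : j + k = n) : a ^ j * b ^ k ≤ s ^ n :=
    hn ▸ pow_mul_pow_le_pow_add_of_mul_eq_sq hb hbs hab hjk
  calc (a + b) ^ n - (2 * s) ^ n
    _ = ∑ k ∈ range (n + 1), (n.choose k : R) * (a ^ (n - k) * b ^ k - s ^ n) :=
      add_pow_sub_two_mul_pow_eq_sum a b s n
    _ ≤ ∑ k ∈ range (n + 1) with 2 * k ≤ n,
          (n.choose k : R) * (a ^ (n - k) * b ^ k - s ^ n) := by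
      rw [← sum_filter_add_sum_filter_not (range (n + 1)) (fun k => 2 * k ≤ n)]
      refine add_le_of_nonpos_right (sum_nonpos fun k hk => ?_)
      rw [mem_filter, mem_range] at hk
      exact mul_nonpos_of_nonneg_of_nonpos (Nat.cast_nonneg _)
        (sub_nonpos.2 (pow_mul_pow_le (by lia) (by lia)))
    _ ≤ ∑ k ∈ range (n + 1) with 2 * k ≤ n,
          (n.choose k : R) * (a ^ (n - k) * b ^ k - a ^ k * b ^ (n - k)) := by
      refine sum_le_sum fun k hk => ?_
      rw [mem_filter] at hk
      gcongr
      exact pow_mul_pow_le (by lia) (by lia)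

theorem stmt17_general {ε : ℝ} (hε0 : 0 ≤ ε) (hε1 : ε ≤ 1) (n : ℕ) :
    (1 / 2 ^ n) *
        ∑ k ∈ range (n + 1) with 2 * k ≤ n,
          (n.choose k : ℝ) *
            ((1 + ε) ^ (n - k) * (1 - ε) ^ k - (1 + ε) ^ k * (1 - ε) ^ (n - k)) ≥
      1 - (1 - ε ^ 2) ^ ((n : ℝ) / 2) := by
  have hε2 : 0 ≤ 1 - ε ^ 2 := sub_nonneg.2 (pow_le_one₀ hε0 hε1)
  have hab : (1 + ε) * (1 - ε) = √(1 - ε ^ 2) ^ 2 := by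
    rw [sq_sqrt hε2]
    ring
  calc 1 - (1 - ε ^ 2) ^ ((n : ℝ) / 2)
    _ = 1 - √(1 - ε ^ 2) ^ n := by rw [rpow_div_two_eq_sqrt _ hε2, rpow_natCast]
    _ = (1 / 2 ^ n) * (((1 + ε) + (1 - ε)) ^ n - (2 * √(1 - ε ^ 2)) ^ n) := by
      rw [add_add_sub_cancel, one_add_one_eq_two, mul_pow]
      field_simp
    _ ≤ _ := by
      gcongr
      exact add_pow_sub_two_mul_pow_le_sum_choose_mul_sub (by linarith) (by linarith)
        (sqrt_nonneg _) hab n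

/-- Binomial estimate: for `0 < ε ≤ 1/2` and all sufficiently large `n`,
`2^{-n} Σ_{0 ≤ k ≤ n/2} C(n,k) ((1+ε)^{n-k}(1-ε)^k - (1+ε)^k(1-ε)^{n-k})
  ≥ (1/2)(1 - (1-ε²)^{n/2})`. -/
theorem stmt17 (ε : ℝ) (hε0 : 0 < ε) (hε : ε ≤ 1 / 2) :
    ∃ N : ℕ, ∀ n : ℕ, N ≤ n →
      (1 / 2 ^ n) *
          ∑ k ∈ (Finset.range (n + 1)).filter (fun k => 2 * k ≤ n),
            (n.choose k : ℝ) *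
              ((1 + ε) ^ (n - k) * (1 - ε) ^ k - (1 + ε) ^ k * (1 - ε) ^ (n - k)) ≥
        (1 / 2) * (1 - (1 - ε ^ 2) ^ ((n : ℝ) / 2)) := by
  refine ⟨0, fun n _ => ?_⟩
  have hpow : (1 - ε ^ 2) ^ ((n : ℝ) / 2) ≤ 1 :=
    rpow_le_one (by nlinarith) (by nlinarith) (by positivity)
  linarith [stmt17_general hε0.le (by linarith) n]
end
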